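/- arXiv:2011.11152 — 6 statements merged into one kernel-verified Lean document; each statement's English description precedes it below -/
import Mathlib

section
/- Let β1, β3, η, λ ∈ ℝ, let V be a real vector space, let (g_t)_{t≥1} be a sequence in V, and let θ_0 ∈ V. Define the Heavy Ball Method with L2 regularization by m_0 = 0, m_t = β1·m_{t-1} + β3·(g_t + λ·θ_{t-1}), θ_t = θ_{t-1} - η·m_t for t ≥ 1, and define the momentum without regularization by m'_0 = 0, m'_t = β1·m'_{t-1} + β3·g_t. Then for every t ≥ 1: θ_t = θ_{t-1} - η·m'_t - η·λ·β3·Σ_{k=1}^{t} β1^{k-1}·θ_{t-k}. -/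
/-!
The gap between the regularized and the unregularized momentum satisfies the affine recurrence
`d_{t+1} = β1 • d_t + (λ * β3) • θ_t`, so unrolling it from `d_0 = 0` turns the single decay term
`λ • θ_t` into a geometrically weighted sum over all past iterates.
-/

section AffineRecurrence

variable {R M : Type*} [Monoid R] [AddCommMonoid M] [DistribMulAction R M]

theorem sum_range_pow_smul_sub_succ (a : R) (u : ℕ → M) (n : ℕ) :
    ∑ k ∈ Finset.range (n + 2), a ^ k • u (n + 1 - k) =
      a • ∑ k ∈ Finset.range (n + 1), a ^ k • u (n - k) + u (n + 1) := by
  rw [Finset.sum_range_succ', Finset.smul_sum]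
  simp only [pow_succ', mul_smul, Nat.add_sub_add_right, pow_zero, one_smul, Nat.sub_zero]

theorem affine_recurrence_eq_pow_smul_add_sum {a : R} {d u : ℕ → M}
    (hd : ∀ n, d (n + 1) = a • d n + u n) (n : ℕ) :
    d (n + 1) = a ^ (n + 1) • d 0 + ∑ k ∈ Finset.range (n + 1), a ^ k • u (n - k) := by
  induction n with
  | zero => simp [hd]
  | succ n ih =>
    rw [hd, ih, sum_range_pow_smul_sub_succ, smul_add, smul_smul, ← pow_succ', add_assoc]

end AffineRecurrence

section HeavyBall

variable {R V : Type*} [CommRing R] [AddCommGroup V] [Module R V]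
  {beta1 beta3 lam : R} {g theta m m' : ℕ → V}

theorem regularized_momentum_sub_momentum_succ
    (hm : ∀ t, m (t + 1) = beta1 • m t + beta3 • (g (t + 1) + lam • theta t))
    (hm' : ∀ t, m' (t + 1) = beta1 • m' t + beta3 • g (t + 1)) (t : ℕ) :
    m (t + 1) - m' (t + 1) = beta1 • (m t - m' t) + (lam * beta3) • theta t := by
  rw [hm, hm']
  module

theorem regularized_momentum_eq_momentum_add_sum (h0 : m 0 = m' 0)
    (hm : ∀ t, m (t + 1) = beta1 • m t + beta3 • (g (t + 1) + lam • theta t))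
    (hm' : ∀ t, m' (t + 1) = beta1 • m' t + beta3 • g (t + 1)) (t : ℕ) :
    m (t + 1) = m' (t + 1) +
      (lam * beta3) • ∑ k ∈ Finset.range (t + 1), beta1 ^ k • theta (t - k) := by
  have gap_eq_sum : m (t + 1) - m' (t + 1) =
      ∑ k ∈ Finset.range (t + 1), beta1 ^ k • (lam * beta3) • theta (t - k) := by
    simpa only [h0, sub_self, smul_zero, zero_add] using
      affine_recurrence_eq_pow_smul_add_sum (d := fun t ↦ m t - m' t)
        (regularized_momentum_sub_momentum_succ hm hm') t
  rw [← sub_eq_iff_eq_add', gap_eq_sum, Finset.smul_sum]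
  exact Finset.sum_congr rfl fun k _ ↦ smul_comm _ _ _

theorem hbm_L2_decays_past_iterates_general {eta : R} (h0 : m 0 = m' 0)
    (hm : ∀ t, m (t + 1) = beta1 • m t + beta3 • (g (t + 1) + lam • theta t))
    (htheta : ∀ t, theta (t + 1) = theta t - eta • m (t + 1))
    (hm' : ∀ t, m' (t + 1) = beta1 • m' t + beta3 • g (t + 1)) (t : ℕ) :
    theta (t + 1) = theta t - eta • m' (t + 1)
      - (eta * lam * beta3) • ∑ k ∈ Finset.range (t + 1), beta1 ^ k • theta (t - k) := by
  rw [htheta, regularized_momentum_eq_momentum_add_sum h0 hm hm', smul_add, smul_smul,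
    ← mul_assoc, sub_add_eq_sub_sub]

end HeavyBall

open Finset in
/-- **HBM with L2 regularization decays an exponentially weighted sum of past iterates**
(key expansion in the proof of Proposition 2). With momentum buffer
`m_t = β1·m_{t-1} + β3·(g_t + λ·θ_{t-1})`, `θ_t = θ_{t-1} - η·m_t`, and the unregularized
momentum `m'_t = β1·m'_{t-1} + β3·g_t`, one has for every `t ≥ 1`
`θ_t = θ_{t-1} - η·m'_t - η·λ·β3·Σ_{k=1}^{t} β1^{k-1}·θ_{t-k}`. -/
theorem hbm_L2_decays_past_iterates
    (V : Type*) [AddCommGroup V] [Module ℝ V]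
    (beta1 beta3 eta lam : ℝ) (g : ℕ → V) (theta m m' : ℕ → V)
    (hm0 : m 0 = 0)
    (hm : ∀ t : ℕ, m (t + 1) = beta1 • m t + beta3 • (g (t + 1) + lam • theta t))
    (htheta : ∀ t : ℕ, theta (t + 1) = theta t - eta • m (t + 1))
    (hm'0 : m' 0 = 0)
    (hm' : ∀ t : ℕ, m' (t + 1) = beta1 • m' t + beta3 • g (t + 1)) :
    ∀ t : ℕ, theta (t + 1) =
      theta t - eta • m' (t + 1)
        - (eta * lam * beta3) • ∑ k ∈ Finset.range (t + 1), beta1 ^ k • theta (t - k) := by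
  exact hbm_L2_decays_past_iterates_general (hm0.trans hm'0.symm) hm htheta hm'
end

section
/- Let β1 ∈ (0,1), β3, η, λ ∈ ℝ, let V be a real vector space, (g_t)_{t≥1} a sequence in V, θ_0 ∈ V, and define m_0 = 0, m_t = β1·m_{t-1} + β3·(g_t + λ·θ_{t-1}), θ_t = θ_{t-1} - η·m_t, and m'_0 = 0, m'_t = β1·m'_{t-1} + β3·g_t. For t ≥ 1 define the exponential moving average ⟨θ⟩_{t-1} := ((1-β1)/(1-β1^t))·Σ_{k=1}^{t} β1^{k-1}·θ_{t-k}. Then for every t ≥ 1: θ_t = θ_{t-1} - η·m'_t - η·λ·β3·((1-β1^t)/(1-β1))·⟨θ⟩_{t-1}. -/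
/-!
The regularized and unregularized momentum buffers satisfy the same linear recurrence with
different inputs, so their difference satisfies it with the input `β3·λ·θ`. Unrolling that
recurrence from `0` gives `β3·λ·∑ β1 ^ k·θ_{t-k}`, and this geometrically weighted sum is the
exponential moving average times its normalization `(1 - β1 ^ (t + 1)) / (1 - β1)`.
-/

theorem eq_pow_smul_add_sum_of_linear_recurrence {R V : Type*} [Semiring R] [AddCommMonoid V]
    [Module R V] {a : R} {x u : ℕ → V} (hx : ∀ t, x (t + 1) = a • x t + u t) (t : ℕ) :
    x (t + 1) = a ^ (t + 1) • x 0 + ∑ k ∈ Finset.range (t + 1), a ^ k • u (t - k) := by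
  induction t with
  | zero => simp [hx 0]
  | succ t ih =>
    have shift : ∑ k ∈ Finset.range (t + 1), a ^ (k + 1) • u (t + 1 - (k + 1)) =
        a • ∑ k ∈ Finset.range (t + 1), a ^ k • u (t - k) := by
      simp only [Finset.smul_sum, smul_smul, pow_succ', Nat.add_sub_add_right]
    rw [hx (t + 1), ih, Finset.sum_range_succ' _ (t + 1), shift, smul_add, smul_smul,
      ← pow_succ', pow_zero, one_smul, Nat.sub_zero, add_assoc]

theorem momentum_sub_momentum_eq_smul_sum {R V : Type*} [CommRing R] [AddCommGroup V]
    [Module R V] {beta1 beta3 lam : R} {g theta m m' : ℕ → V} (h0 : m 0 = m' 0)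
    (hm : ∀ t, m (t + 1) = beta1 • m t + beta3 • (g (t + 1) + lam • theta t))
    (hm' : ∀ t, m' (t + 1) = beta1 • m' t + beta3 • g (t + 1)) (t : ℕ) :
    m (t + 1) - m' (t + 1) =
      (beta3 * lam) • ∑ k ∈ Finset.range (t + 1), beta1 ^ k • theta (t - k) := by
  have recurrence (s : ℕ) :
      (m - m') (s + 1) = beta1 • (m - m') s + (beta3 * lam) • theta s := by
    simp only [Pi.sub_apply, hm, hm']
    module
  have unrolled := eq_pow_smul_add_sum_of_linear_recurrence recurrence t
  simpa only [Pi.sub_apply, h0, sub_self, smul_zero, zero_add, Finset.smul_sum,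
    smul_comm (beta3 * lam)] using unrolled

theorem hbm_L2_decays_ema_of_past_iterates_general {K V : Type*} [Field K] [AddCommGroup V]
    [Module K V] {beta1 beta3 eta lam : K} {g theta m m' ema : ℕ → V} (h0 : m 0 = m' 0)
    (hm : ∀ t, m (t + 1) = beta1 • m t + beta3 • (g (t + 1) + lam • theta t))
    (htheta : ∀ t, theta (t + 1) = theta t - eta • m (t + 1))
    (hm' : ∀ t, m' (t + 1) = beta1 • m' t + beta3 • g (t + 1))
    (hema : ∀ t, ema t = ((1 - beta1) / (1 - beta1 ^ (t + 1))) •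
      ∑ k ∈ Finset.range (t + 1), beta1 ^ k • theta (t - k))
    {t : ℕ} (hpow : beta1 ^ (t + 1) ≠ 1) :
    theta (t + 1) = theta t - eta • m' (t + 1) -
      (eta * lam * beta3 * ((1 - beta1 ^ (t + 1)) / (1 - beta1))) • ema t := by
  have hbeta1 : beta1 ≠ 1 := fun h => hpow (by rw [h, one_pow])
  have sum_eq : ∑ k ∈ Finset.range (t + 1), beta1 ^ k • theta (t - k) =
      ((1 - beta1 ^ (t + 1)) / (1 - beta1)) • ema t := by
    rw [hema, ← inv_div (1 - beta1), inv_smul_smul₀]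
    exact div_ne_zero (sub_ne_zero.mpr hbeta1.symm) (sub_ne_zero.mpr hpow.symm)
  have momentum_eq : m (t + 1) = m' (t + 1) +
      (beta3 * lam) • ((1 - beta1 ^ (t + 1)) / (1 - beta1)) • ema t := by
    rw [← sum_eq, ← momentum_sub_momentum_eq_smul_sum h0 hm hm' t, add_sub_cancel]
  rw [htheta, momentum_eq]
  module

open Finset in
/-- **Proposition 2 (expansion form): HBM with L2 regularization decays the exponential moving
average of past iterates.** With `β1 ∈ (0,1)`, momentum buffer
`m_t = β1·m_{t-1} + β3·(g_t + λ·θ_{t-1})`, `θ_t = θ_{t-1} - η·m_t`, unregularized momentum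
`m'_t = β1·m'_{t-1} + β3·g_t`, and EMA
`⟨θ⟩_{t-1} = ((1-β1)/(1-β1^t))·Σ_{k=1}^{t} β1^{k-1}·θ_{t-k}`, one has for every `t ≥ 1`
`θ_t = θ_{t-1} - η·m'_t - η·λ·β3·((1-β1^t)/(1-β1))·⟨θ⟩_{t-1}`. -/
theorem hbm_L2_decays_ema_of_past_iterates
    (V : Type*) [AddCommGroup V] [Module ℝ V]
    (beta1 beta3 eta lam : ℝ) (hbeta1 : beta1 ∈ Set.Ioo (0 : ℝ) 1)
    (g : ℕ → V) (theta m m' : ℕ → V)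
    (hm0 : m 0 = 0)
    (hm : ∀ t : ℕ, m (t + 1) = beta1 • m t + beta3 • (g (t + 1) + lam • theta t))
    (htheta : ∀ t : ℕ, theta (t + 1) = theta t - eta • m (t + 1))
    (hm'0 : m' 0 = 0)
    (hm' : ∀ t : ℕ, m' (t + 1) = beta1 • m' t + beta3 • g (t + 1))
    (ema : ℕ → V)
    (hema : ∀ t : ℕ, ema t =
      ((1 - beta1) / (1 - beta1 ^ (t + 1))) • ∑ k ∈ Finset.range (t + 1), beta1 ^ k • theta (t - k)) :
    ∀ t : ℕ, theta (t + 1) =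
      theta t - eta • m' (t + 1)
        - (eta * lam * beta3 * ((1 - beta1 ^ (t + 1)) / (1 - beta1))) • ema t := by
  exact fun t => hbm_L2_decays_ema_of_past_iterates_general (hm0.trans hm'0.symm) hm htheta hm' hema
    (pow_lt_one₀ hbeta1.1.le hbeta1.2 t.succ_ne_zero).ne
end

section
/- Let β1, β3, η, λ ∈ ℝ, let V be a real vector space, (g_t)_{t≥1} a sequence in V, θ_0 ∈ V, and define m_0 = 0, m_t = β1·m_{t-1} + β3·(g_t + λ·θ_{t-1}), θ_t = θ_{t-1} - η·m_t, and m'_0 = 0, m'_t = β1·m'_{t-1} + β3·g_t. Then for every t ≥ 1, the L2-regularized iterate θ_t differs from the stable-weight-decay step applied to the same history by θ_t - (θ_{t-1} - η·m'_t - η·λ·β3·(Σ_{k=1}^{t} β1^{k-1})·θ_{t-1}) = η·λ·β3·Σ_{k=2}^{t} β1^{k-1}·(θ_{t-1} - θ_{t-k}). In particular, the two steps coincide at step t if and only if η·λ·β3·Σ_{k=2}^{t} β1^{k-1}·(θ_{t-1} - θ_{t-k}) = 0. -/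
/-!
L2 regularization adds `β3 λ θ_t` to the input of step `t + 1` of the momentum recurrence, which is
linear. So `m - m'` solves that recurrence with input `β3 λ θ` alone, and unrolling it shows that
L2 regularization decays along the geometrically weighted iterates `∑ j ≤ t, β1 ^ j • θ_{t-j}`.
Stable weight decay puts the current iterate `θ_t` in place of each of these; the error is the
weighted sum of the deviations `θ_t - θ_{t-j}`, whose `j = 0` term vanishes.
-/

open Finset

theorem eq_pow_smul_add_sum_of_succ_eq_smul_add {R M : Type*} [Monoid R] [AddCommMonoid M]
    [DistribMulAction R M] {a : R} {u w : ℕ → M} (hu : ∀ t, u (t + 1) = a • u t + w t) (t : ℕ) :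
    u (t + 1) = a ^ (t + 1) • u 0 + ∑ j ∈ range (t + 1), a ^ j • w (t - j) := by
  induction t with
  | zero => simp [hu]
  | succ t ih =>
    have shift_sum : ∑ j ∈ range (t + 1), a ^ (j + 1) • w (t + 1 - (j + 1))
        = a • ∑ j ∈ range (t + 1), a ^ j • w (t - j) := by
      simp only [smul_sum, smul_smul, pow_succ', Nat.add_sub_add_right]
    rw [hu (t + 1), ih, sum_range_succ' _ (t + 1), shift_sum, smul_add, smul_smul, ← pow_succ',
      pow_zero, one_smul, Nat.sub_zero, add_assoc]

theorem sum_Icc_smul_sub_eq_sum_range {R M : Type*} [Ring R] [AddCommGroup M] [Module R M]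
    (c : ℕ → R) (x : ℕ → M) (t : ℕ) :
    ∑ j ∈ Icc 1 t, c j • (x t - x (t - j))
      = (∑ j ∈ range (t + 1), c j) • x t - ∑ j ∈ range (t + 1), c j • x (t - j) := by
  calc ∑ j ∈ Icc 1 t, c j • (x t - x (t - j))
      = ∑ j ∈ range (t + 1), c j • (x t - x (t - j)) := by
        rw [sum_range_eq_add_Ico _ t.add_one_pos, Ico_add_one_right_eq_Icc, Nat.sub_zero, sub_self,
          smul_zero, zero_add]
    _ = (∑ j ∈ range (t + 1), c j) • x t - ∑ j ∈ range (t + 1), c j • x (t - j) := by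
        simp only [smul_sub, sum_sub_distrib, sum_smul]

section HeavyBall

variable {R V : Type*} [CommRing R] [AddCommGroup V] [Module R V]
  {beta1 beta3 eta lam : R} {g theta m m' : ℕ → V}

theorem hbm_L2_momentum_eq_add_sum (h0 : m 0 = m' 0)
    (hm : ∀ t, m (t + 1) = beta1 • m t + beta3 • (g (t + 1) + lam • theta t))
    (hm' : ∀ t, m' (t + 1) = beta1 • m' t + beta3 • g (t + 1)) (t : ℕ) :
    m (t + 1) = m' (t + 1)
      + (lam * beta3) • ∑ j ∈ range (t + 1), beta1 ^ j • theta (t - j) := by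
  have sub_succ (s : ℕ) :
      (m - m') (s + 1) = beta1 • (m - m') s + (lam * beta3) • theta s := by
    simp only [Pi.sub_apply, hm, hm']
    module
  have unrolled := eq_pow_smul_add_sum_of_succ_eq_smul_add sub_succ t
  rw [Pi.sub_apply, Pi.sub_apply, h0, sub_self, smul_zero, zero_add, sub_eq_iff_eq_add'] at unrolled
  simpa only [smul_sum, smul_comm (lam * beta3)] using unrolled

theorem hbm_L2_vs_swd_difference_general (h0 : m 0 = m' 0)
    (hm : ∀ t, m (t + 1) = beta1 • m t + beta3 • (g (t + 1) + lam • theta t))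
    (hm' : ∀ t, m' (t + 1) = beta1 • m' t + beta3 • g (t + 1))
    {t : ℕ} (htheta : theta (t + 1) = theta t - eta • m (t + 1)) :
    (theta (t + 1)
        - (theta t - eta • m' (t + 1)
            - ((eta * lam * beta3) * ∑ k ∈ range (t + 1), beta1 ^ k) • theta t)
      = (eta * lam * beta3) • ∑ j ∈ Icc 1 t, beta1 ^ j • (theta t - theta (t - j))) ∧
    (theta (t + 1)
        = theta t - eta • m' (t + 1)
            - ((eta * lam * beta3) * ∑ k ∈ range (t + 1), beta1 ^ k) • theta t
      ↔ (eta * lam * beta3) • ∑ j ∈ Icc 1 t, beta1 ^ j • (theta t - theta (t - j)) = 0) := by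
  have difference : theta (t + 1)
      - (theta t - eta • m' (t + 1)
          - ((eta * lam * beta3) * ∑ k ∈ range (t + 1), beta1 ^ k) • theta t)
      = (eta * lam * beta3) • ∑ j ∈ Icc 1 t, beta1 ^ j • (theta t - theta (t - j)) := by
    rw [htheta, hbm_L2_momentum_eq_add_sum h0 hm hm', sum_Icc_smul_sub_eq_sum_range]
    module
  exact ⟨difference, by rw [← difference, sub_eq_zero]⟩

end HeavyBall

open Finset in
/-- **Difference between HBM with L2 regularization and the stable-weight-decay step.**
With `m_t = β1·m_{t-1} + β3·(g_t + λ·θ_{t-1})`, `θ_t = θ_{t-1} - η·m_t` and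
`m'_t = β1·m'_{t-1} + β3·g_t`, for every `t ≥ 1` the L2-regularized iterate differs from the
stable-weight-decay step applied to the same history by
`θ_t - (θ_{t-1} - η·m'_t - η·λ·β3·(Σ_{k=1}^{t} β1^{k-1})·θ_{t-1})
  = η·λ·β3·Σ_{k=2}^{t} β1^{k-1}·(θ_{t-1} - θ_{t-k})`,
and the two steps coincide at step `t` iff this correction term vanishes. -/
theorem hbm_L2_vs_swd_difference
    (V : Type*) [AddCommGroup V] [Module ℝ V]
    (beta1 beta3 eta lam : ℝ) (g : ℕ → V) (theta m m' : ℕ → V)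
    (hm0 : m 0 = 0)
    (hm : ∀ t : ℕ, m (t + 1) = beta1 • m t + beta3 • (g (t + 1) + lam • theta t))
    (htheta : ∀ t : ℕ, theta (t + 1) = theta t - eta • m (t + 1))
    (hm'0 : m' 0 = 0)
    (hm' : ∀ t : ℕ, m' (t + 1) = beta1 • m' t + beta3 • g (t + 1)) :
    ∀ t : ℕ,
      (theta (t + 1)
          - (theta t - eta • m' (t + 1)
              - ((eta * lam * beta3) * ∑ k ∈ Finset.range (t + 1), beta1 ^ k) • theta t)
        = (eta * lam * beta3) • ∑ j ∈ Finset.Icc 1 t, beta1 ^ j • (theta t - theta (t - j))) ∧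
      (theta (t + 1)
          = theta t - eta • m' (t + 1)
              - ((eta * lam * beta3) * ∑ k ∈ Finset.range (t + 1), beta1 ^ k) • theta t
        ↔ (eta * lam * beta3) • ∑ j ∈ Finset.Icc 1 t, beta1 ^ j • (theta t - theta (t - j)) = 0) := by
  intro t
  exact hbm_L2_vs_swd_difference_general (hm0.trans hm'0.symm) hm hm' (htheta t)
end

section
/- Let β1 ∈ (0,1), β3, η, λ ∈ ℝ with η·λ·β3·β1 ≠ 0, let V be a real vector space, and let g_1, g_2, θ_0 ∈ V. Define the HBM-with-L2 trajectory: m_1 = β3·(g_1 + λ·θ_0), θ_1 = θ_0 - η·m_1, m_2 = β1·m_1 + β3·(g_2 + λ·θ_1), θ_2 = θ_1 - η·m_2. Define the HBM-with-stable-weight-decay trajectory: m'_1 = β3·g_1, θ'_1 = θ_0 - η·m'_1 - η·λ·β3·θ_0, m'_2 = β1·m'_1 + β3·g_2, θ'_2 = θ'_1 - η·m'_2 - η·λ·β3·(1+β1)·θ'_1. Then θ'_1 = θ_1, and θ_2 - θ'_2 = η·λ·β3·β1·(θ_1 - θ_0); hence if θ_1 ≠ θ_0, then θ_2 ≠ θ'_2.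 In particular, L2 regularization is not identical to weight decay in the presence of Momentum (β1 > 0). -/
/-!
With L2 regularization the momentum buffer carries, besides the gradients, an exponentially
weighted sum of the past parameters. Stable weight decay puts the total weight of that sum on the
current parameter instead. The two methods therefore agree until the parameter has moved, and the
first discrepancy is `η * lam * β₃ * β₁` times the displacement of the parameter in the first step.
-/

section HeavyBall

variable {R V : Type*} [CommRing R] [AddCommGroup V] [Module R V]

/-- The momentum buffer of the heavy ball method with inertia `β₁` and dampening coefficient `β₃`,
updated from the buffer `m` by the gradient `g`. -/
def hbmMomentum (β₁ β₃ : R) (m g : V) : V :=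
  β₁ • m + β₃ • g

/-- The parameter after one step of the heavy ball method with L2 regularization, which adds
`lam • θ` to the gradient before it enters the momentum buffer. Here `m` is the buffer and `θ` the
parameter before the step. -/
def hbmL2Step (β₁ β₃ η lam : R) (m θ g : V) : V :=
  θ - η • hbmMomentum β₁ β₃ m (g + lam • θ)

/-- The parameter after one step of the heavy ball method with weight decay decoupled from the
momentum. Stable weight decay takes `w = 1 + β₁ + ⋯ + β₁ ^ (t - 1)` at step `t`, the value of
`(1 - β₁ ^ t) / (1 - β₁)`; the sum avoids the division. -/
def hbmDecayStep (β₁ β₃ η lam w : R) (m θ g : V) : V :=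
  θ - η • hbmMomentum β₁ β₃ m g - (η * lam * β₃ * w) • θ

theorem hbmMomentum_zero (β₁ β₃ : R) (g : V) : hbmMomentum β₁ β₃ 0 g = β₃ • g := by
  rw [hbmMomentum, smul_zero, zero_add]

theorem hbmMomentum_sub_hbmMomentum (β₁ β₃ : R) (m m' g g' : V) :
    hbmMomentum β₁ β₃ m g - hbmMomentum β₁ β₃ m' g' = hbmMomentum β₁ β₃ (m - m') (g - g') := by
  unfold hbmMomentum
  module

-- Along the trajectories, `φ` is the weighted sum of past parameters held in the L2 buffer, and
-- `w` is the sum of its weights.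
theorem hbmL2Step_sub_hbmDecayStep {β₃ lam : R} {m m' φ : V} (hφ : m - m' = (lam * β₃) • φ)
    (β₁ η w : R) (θ g : V) :
    hbmL2Step β₁ β₃ η lam m θ g - hbmDecayStep β₁ β₃ η lam (1 + β₁ * w) m' θ g =
      (η * lam * β₃ * β₁) • (w • θ - φ) := by
  have buffer_gap : hbmMomentum β₁ β₃ m (g + lam • θ) - hbmMomentum β₁ β₃ m' g =
      (lam * β₃) • (β₁ • φ + θ) := by
    rw [hbmMomentum_sub_hbmMomentum, hφ, add_sub_cancel_left, hbmMomentum]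
    module
  calc
    _ = (η * lam * β₃ * (1 + β₁ * w)) • θ -
        η • (hbmMomentum β₁ β₃ m (g + lam • θ) - hbmMomentum β₁ β₃ m' g) := by
      unfold hbmL2Step hbmDecayStep
      module
    _ = (η * lam * β₃ * β₁) • (w • θ - φ) := by
      rw [buffer_gap]
      module

theorem hbmDecayStep_one_zero_eq_hbmL2Step_zero (β₁ β₃ η lam : R) (θ g : V) :
    hbmDecayStep β₁ β₃ η lam 1 0 θ g = hbmL2Step β₁ β₃ η lam 0 θ g := by
  have gap := hbmL2Step_sub_hbmDecayStep (β₃ := β₃) (lam := lam) (m := 0) (m' := 0) (φ := (0 : V))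
    (by simp) β₁ η 0 θ g
  rw [mul_zero, add_zero, zero_smul, sub_zero, smul_zero] at gap
  exact (sub_eq_zero.mp gap).symm

theorem hbmL2Step_sub_hbmDecayStep_second_step (β₁ β₃ η lam : R) (θ₀ θ₁ g₁ g₂ : V) :
    hbmL2Step β₁ β₃ η lam (β₃ • (g₁ + lam • θ₀)) θ₁ g₂ -
        hbmDecayStep β₁ β₃ η lam (1 + β₁) (β₃ • g₁) θ₁ g₂ =
      (η * lam * β₃ * β₁) • (θ₁ - θ₀) := by
  have first_buffer_gap : β₃ • (g₁ + lam • θ₀) - β₃ • g₁ = (lam * β₃) • θ₀ := by module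
  simpa only [mul_one, one_smul] using hbmL2Step_sub_hbmDecayStep first_buffer_gap β₁ η 1 θ₁ g₂

end HeavyBall

theorem L2_not_identical_to_weight_decay_with_momentum_general
    {R V : Type*} [CommRing R] [IsDomain R] [AddCommGroup V] [Module R V]
    [Module.IsTorsionFree R V]
    {beta1 beta3 eta lam : R}
    (hne : eta * lam * beta3 * beta1 ≠ 0)
    {g1 g2 theta0 m1 theta1 m2 theta2 m'1 theta'1 m'2 theta'2 : V}
    (hm1 : m1 = beta3 • (g1 + lam • theta0))
    (htheta1 : theta1 = theta0 - eta • m1)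
    (hm2 : m2 = beta1 • m1 + beta3 • (g2 + lam • theta1))
    (htheta2 : theta2 = theta1 - eta • m2)
    (hm'1 : m'1 = beta3 • g1)
    (htheta'1 : theta'1 = theta0 - eta • m'1 - (eta * lam * beta3) • theta0)
    (hm'2 : m'2 = beta1 • m'1 + beta3 • g2)
    (htheta'2 : theta'2 = theta'1 - eta • m'2 - (eta * lam * beta3 * (1 + beta1)) • theta'1) :
    theta'1 = theta1 ∧
    theta2 - theta'2 = (eta * lam * beta3 * beta1) • (theta1 - theta0) ∧
    (theta1 ≠ theta0 → theta2 ≠ theta'2) := by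
  have l2_first : theta1 = hbmL2Step beta1 beta3 eta lam 0 theta0 g1 := by
    rw [htheta1, hm1, hbmL2Step, hbmMomentum_zero]
  have decay_first : theta'1 = hbmDecayStep beta1 beta3 eta lam 1 0 theta0 g1 := by
    rw [htheta'1, hm'1, hbmDecayStep, hbmMomentum_zero, mul_one]
  have first_eq : theta'1 = theta1 := by
    rw [decay_first, l2_first, hbmDecayStep_one_zero_eq_hbmL2Step_zero]
  have second_gap : theta2 - theta'2 = (eta * lam * beta3 * beta1) • (theta1 - theta0) := by
    rw [htheta2, htheta'2, hm2, hm'2, hm1, hm'1, first_eq]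
    exact hbmL2Step_sub_hbmDecayStep_second_step beta1 beta3 eta lam theta0 theta1 g1 g2
  refine ⟨first_eq, second_gap, fun moved ↦ sub_ne_zero.mp ?_⟩
  rw [second_gap]
  exact smul_ne_zero hne (sub_ne_zero.mpr moved)

/-- **L2 regularization is not identical to weight decay in the presence of Momentum**
(Proposition 2, two-step witness). With `β1 ∈ (0,1)` and `η·λ·β3·β1 ≠ 0`, run two steps of
HBM with L2 regularization and two steps of HBM with stable weight decay from the same `θ_0`.
Then the first iterates agree, the second iterates differ by
`θ_2 - θ'_2 = η·λ·β3·β1·(θ_1 - θ_0)`, and hence `θ_1 ≠ θ_0` implies `θ_2 ≠ θ'_2`. -/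
theorem L2_not_identical_to_weight_decay_with_momentum
    (V : Type*) [AddCommGroup V] [Module ℝ V]
    (beta1 beta3 eta lam : ℝ) (hbeta1 : beta1 ∈ Set.Ioo (0 : ℝ) 1)
    (hne : eta * lam * beta3 * beta1 ≠ 0)
    (g1 g2 theta0 : V)
    (m1 theta1 m2 theta2 m'1 theta'1 m'2 theta'2 : V)
    (hm1 : m1 = beta3 • (g1 + lam • theta0))
    (htheta1 : theta1 = theta0 - eta • m1)
    (hm2 : m2 = beta1 • m1 + beta3 • (g2 + lam • theta1))
    (htheta2 : theta2 = theta1 - eta • m2)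
    (hm'1 : m'1 = beta3 • g1)
    (htheta'1 : theta'1 = theta0 - eta • m'1 - (eta * lam * beta3) • theta0)
    (hm'2 : m'2 = beta1 • m'1 + beta3 • g2)
    (htheta'2 : theta'2 = theta'1 - eta • m'2 - (eta * lam * beta3 * (1 + beta1)) • theta'1) :
    theta'1 = theta1 ∧
    theta2 - theta'2 = (eta * lam * beta3 * beta1) • (theta1 - theta0) ∧
    (theta1 ≠ theta0 → theta2 ≠ theta'2) := by
  exact L2_not_identical_to_weight_decay_with_momentum_general hne hm1 htheta1 hm2 htheta2
    hm'1 htheta'1 hm'2 htheta'2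
end

section
/- Let β1 ∈ (0,1), β3, η, λ ∈ ℝ with η ≠ 0, let θ_t, m_t, m'_t be real-valued (or coordinatewise) sequences generated by HBM with L2 regularization: m_0 = 0, m_t = β1·m_{t-1} + β3·(g_t + λ·θ_{t-1}), θ_t = θ_{t-1} - η·m_t, and m'_0 = 0, m'_t = β1·m'_{t-1} + β3·g_t. Fix t ≥ 1 and suppose θ_{t-1} ≠ 0. Then the step-t update can be written in the form θ_t = (1 - η·μ_t)·θ_{t-1} - η·m'_t with μ_t = λ·β3·((1-β1^t)/(1-β1))·⟨θ⟩_{t-1}/θ_{t-1}, where ⟨θ⟩_{t-1} := ((1-β1)/(1-β1^t))·Σ_{k=1}^{t} β1^{k-1}·θ_{t-k}; hence the weight decay rate of HBM with L2 regularization at step t is R_t = 1 - λ·β3·((1-β1^t)/(1-β1))·⟨θ⟩_{t-1}/θ_{t-1}, which depends on the trajectory and is therefore not constant in general. -/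
/-!
The difference of the momentum buffers with and without L2 regularization satisfies
`d_{t+1} = β₁ d_t + λβ₃ θ_t` with `d_0 = 0`, so it unrolls to `λβ₃` times the discounted sum
`∑ β₁ ^ k θ_{t-k}`, which is the moving average of the iterates up to its normalization. Matching
this extra term of the step against the decay term `μ θ_t` determines `μ`.
-/

section Recurrence

variable {R M : Type*}

theorem eq_sum_pow_smul_of_linear_recurrence [Semiring R] [AddCommMonoid M] [Module R M]
    {β : R} {x d : ℕ → M} (hd0 : d 0 = 0) (hd : ∀ n, d (n + 1) = β • d n + x n) (n : ℕ) :
    d (n + 1) = ∑ k ∈ Finset.range (n + 1), β ^ k • x (n - k) := by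
  induction n with
  | zero => simp [hd, hd0]
  | succ n ih =>
    rw [hd, ih, Finset.smul_sum, Finset.sum_range_succ' _ (n + 1)]
    simp only [Nat.add_sub_add_right, pow_succ', mul_smul, pow_zero, one_smul, Nat.sub_zero]

theorem l2_momentum_eq_momentum_add [CommRing R] [AddCommGroup M] [Module R M]
    {β₁ β₃ lam : R} {g θ m m' : ℕ → M} (h0 : m 0 = m' 0)
    (hm : ∀ t, m (t + 1) = β₁ • m t + β₃ • (g (t + 1) + lam • θ t))
    (hm' : ∀ t, m' (t + 1) = β₁ • m' t + β₃ • g (t + 1)) (t : ℕ) :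
    m (t + 1) =
      m' (t + 1) + (lam * β₃) • ∑ k ∈ Finset.range (t + 1), β₁ ^ k • θ (t - k) := by
  have diff_succ (n : ℕ) : (m - m') (n + 1) = β₁ • (m - m') n + (lam * β₃) • θ n := by
    simp only [Pi.sub_apply, hm, hm']
    module
  have diff_eq_sum :=
    eq_sum_pow_smul_of_linear_recurrence (sub_eq_zero.mpr h0) diff_succ t
  simp only [smul_comm _ (lam * β₃), ← Finset.smul_sum] at diff_eq_sum
  exact sub_eq_iff_eq_add'.mp diff_eq_sum

end Recurrence

section Field

variable {K : Type*} [Field K]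

/-- The bias-corrected exponential moving average of `x 0, …, x n` with inertia `β`, the paper's
`⟨x⟩_n`. The weights are indexed by age `k`, so `x n` has weight proportional to `β ^ 0`. It is the
junk value `0` when `β ^ (n + 1) = 1`. -/
def biasCorrectedEMA (β : K) (x : ℕ → K) (n : ℕ) : K :=
  ((1 - β) / (1 - β ^ (n + 1))) * ∑ k ∈ Finset.range (n + 1), β ^ k * x (n - k)

theorem div_mul_biasCorrectedEMA {β : K} {n : ℕ} (hβ : β ^ (n + 1) ≠ 1) (x : ℕ → K) :
    (1 - β ^ (n + 1)) / (1 - β) * biasCorrectedEMA β x n =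
      ∑ k ∈ Finset.range (n + 1), β ^ k * x (n - k) := by
  have hβ1 : β ≠ 1 := fun h => hβ (by rw [h, one_pow])
  rw [biasCorrectedEMA, ← mul_assoc,
    div_mul_div_cancel₀ (sub_ne_zero.mpr hβ1.symm), div_self (sub_ne_zero.mpr hβ.symm), one_mul]

theorem sub_mul_add_eq_one_sub_mul_sub_iff {η a : K} (hη : η ≠ 0) (ha : a ≠ 0) (b s μ : K) :
    a - η * (b + s) = (1 - η * μ) * a - η * b ↔ μ = s / a := by
  calc a - η * (b + s) = (1 - η * μ) * a - η * b
      ↔ η * (μ * a) = η * s := by constructor <;> intro h <;> linear_combination h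
    _ ↔ μ = s / a := by rw [mul_right_inj' hη, eq_div_iff ha]

theorem hbm_L2_weight_decay_rate_general {β₁ β₃ η lam : K} (hη : η ≠ 0) {g θ m m' : ℕ → K}
    (h0 : m 0 = m' 0)
    (hm : ∀ t, m (t + 1) = β₁ * m t + β₃ * (g (t + 1) + lam * θ t))
    (hθ : ∀ t, θ (t + 1) = θ t - η * m (t + 1))
    (hm' : ∀ t, m' (t + 1) = β₁ * m' t + β₃ * g (t + 1))
    {t : ℕ} (hβ₁ : β₁ ^ (t + 1) ≠ 1) (hθt : θ t ≠ 0) (μ : K) :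
    θ (t + 1) = (1 - η * μ) * θ t - η * m' (t + 1) ↔
      μ = lam * β₃ * ((1 - β₁ ^ (t + 1)) / (1 - β₁)) * biasCorrectedEMA β₁ θ t / θ t := by
  have momentum_eq : m (t + 1) =
      m' (t + 1) + lam * β₃ * ∑ k ∈ Finset.range (t + 1), β₁ ^ k * θ (t - k) :=
    l2_momentum_eq_momentum_add (β₁ := β₁) (β₃ := β₃) (lam := lam) (θ := θ) h0 hm hm' t
  rw [hθ, momentum_eq, mul_assoc (lam * β₃), div_mul_biasCorrectedEMA hβ₁]
  exact sub_mul_add_eq_one_sub_mul_sub_iff hη hθt _ _ μ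

end Field

open Finset in
/-- **The weight decay rate of HBM with L2 regularization depends on the trajectory**
(Proposition 2, rate form). For real-valued (coordinatewise) dynamics with `β1 ∈ (0,1)`,
`η ≠ 0`, `m_t = β1·m_{t-1} + β3·(g_t + λ·θ_{t-1})`, `θ_t = θ_{t-1} - η·m_t`,
`m'_t = β1·m'_{t-1} + β3·g_t`, and `θ_{t-1} ≠ 0`, the step-`t` update can be written as
`θ_t = (1 - η·μ_t)·θ_{t-1} - η·m'_t` precisely for
`μ_t = λ·β3·((1-β1^t)/(1-β1))·⟨θ⟩_{t-1}/θ_{t-1}`, where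
`⟨θ⟩_{t-1} = ((1-β1)/(1-β1^t))·Σ_{k=1}^{t} β1^{k-1}·θ_{t-k}`. Hence the weight decay rate is
`R_t = 1 - λ·β3·((1-β1^t)/(1-β1))·⟨θ⟩_{t-1}/θ_{t-1}`, which is trajectory dependent. -/
theorem hbm_L2_weight_decay_rate
    (beta1 beta3 eta lam : ℝ) (hbeta1 : beta1 ∈ Set.Ioo (0 : ℝ) 1) (heta : eta ≠ 0)
    (g theta m m' : ℕ → ℝ)
    (hm0 : m 0 = 0)
    (hm : ∀ t : ℕ, m (t + 1) = beta1 * m t + beta3 * (g (t + 1) + lam * theta t))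
    (htheta : ∀ t : ℕ, theta (t + 1) = theta t - eta * m (t + 1))
    (hm'0 : m' 0 = 0)
    (hm' : ∀ t : ℕ, m' (t + 1) = beta1 * m' t + beta3 * g (t + 1))
    (t : ℕ) (hθ : theta t ≠ 0)
    (ema : ℝ)
    (hema : ema = ((1 - beta1) / (1 - beta1 ^ (t + 1)))
      * ∑ k ∈ Finset.range (t + 1), beta1 ^ k * theta (t - k)) :
    ∀ μ : ℝ,
      theta (t + 1) = (1 - eta * μ) * theta t - eta * m' (t + 1)
        ↔ μ = lam * beta3 * ((1 - beta1 ^ (t + 1)) / (1 - beta1)) * ema / theta t := by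
  have hpow : beta1 ^ (t + 1) ≠ 1 := (pow_lt_one₀ hbeta1.1.le hbeta1.2 t.succ_ne_zero).ne
  exact hema ▸ hbm_L2_weight_decay_rate_general heta (hm0.trans hm'0.symm) hm htheta hm' hpow hθ
end

section
/- Let n ∈ ℕ, let L : EuclideanSpace ℝ (Fin n) → ℝ be differentiable, let η, λ ∈ ℝ with c := 1 - η·λ ≠ 0, and let (θ_t)_{t≥0} satisfy θ_t = c·θ_{t-1} - η·∇L(θ_{t-1}) for all t ≥ 1 (SGD with weight decay, Equation 2). Define the rescaled coordinates w_t := c^{-t}·θ_t, and for each t the rescaled loss L^w_t(w) := L(c^t·w). Then for every t ≥ 1: w_t = w_{t-1} - c^{-2t+1}·η·∇L^w_{t-1}(w_{t-1}), where ∇ denotes the gradient (so ∇L^w_{t-1}(w) = c^{t-1}·∇L(c^{t-1}·w)). That is, learning dynamics with weight decay in the coordinates θ is equivalent to learning dynamics without weight decay in the rescaled coordinates w, with the loss landscape flattened by a factor c per iteration and the learning rate scaled by c^{-2} per iteration. -/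
/-!
Multiplying the update by `c ^ (-(t + 1))` cancels the decay factor in front of `θ_t` and leaves the
coefficient `c ^ (-(t + 1)) * η` on `∇L(θ_t)`. By the chain rule `∇L^w_t(w_t) = c ^ t • ∇L(θ_t)`,
so in terms of the rescaled loss the exponent is `-(t + 1) - t = -2 * (t + 1) + 1`.
-/

theorem hasGradientAt_comp_const_smul {𝕜 E : Type*} [RCLike 𝕜] [NormedAddCommGroup E]
    [InnerProductSpace 𝕜 E] [CompleteSpace E] {f : E → 𝕜} {g x : E} (a : 𝕜)
    (hf : HasGradientAt f g (a • x)) :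
    HasGradientAt (fun y => f (a • y)) (starRingEnd 𝕜 a • g) x := by
  have toDual_conj_smul : InnerProductSpace.toDual 𝕜 E (starRingEnd 𝕜 a • g) =
      (InnerProductSpace.toDual 𝕜 E g).comp (a • ContinuousLinearMap.id 𝕜 E) := by
    ext v
    simp [inner_smul_left]
  rw [hasGradientAt_iff_hasFDerivAt, toDual_conj_smul]
  exact hf.hasFDerivAt.comp x ((hasFDerivAt_id x).const_smul a)

theorem zpow_smul_smul_sub_smul {K V : Type*} [Field K] [AddCommGroup V] [Module K V]
    {c : K} (hc : c ≠ 0) (eta : K) (k : ℤ) (x g : V) :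
    c ^ (-(k + 1)) • (c • x - eta • g) =
      c ^ (-k) • x - (c ^ (-2 * (k + 1) + 1) * eta) • c ^ k • g := by
  have coeff_x : c ^ (-(k + 1)) * c = c ^ (-k) := by
    rw [← zpow_add_one₀ hc]
    ring_nf
  have coeff_g : c ^ (-2 * (k + 1) + 1) * c ^ k = c ^ (-(k + 1)) := by
    rw [← zpow_add₀ hc]
    ring_nf
  rw [smul_sub, smul_smul, smul_smul, smul_smul, coeff_x, mul_right_comm, coeff_g]

theorem weight_decay_rescaled_dynamics_general
    {E : Type*} [NormedAddCommGroup E] [InnerProductSpace ℝ E] [CompleteSpace E]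
    {L : ℕ → E → ℝ} {eta : ℕ → ℝ} {c : ℝ} (hc0 : c ≠ 0) {theta : ℕ → E}
    (hL : ∀ t, DifferentiableAt ℝ (L t) (theta t))
    (htheta : ∀ t, theta (t + 1) = c • theta t - eta t • gradient (L t) (theta t))
    {w : ℕ → E} (hw : ∀ t : ℕ, w t = c ^ (-(t : ℤ)) • theta t)
    {Lw : ℕ → E → ℝ} (hLw : ∀ t x, Lw t x = L t (c ^ t • x)) (t : ℕ) :
    w (t + 1) = w t - (c ^ (-2 * ((t : ℤ) + 1) + 1) * eta t) • gradient (Lw t) (w t) := by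
  have theta_eq : c ^ t • w t = theta t := by
    rw [hw, zpow_neg, zpow_natCast, smul_inv_smul₀ (pow_ne_zero t hc0)]
  have gradient_Lw : gradient (Lw t) (w t) = c ^ t • gradient (L t) (theta t) := by
    rw [funext (hLw t)]
    exact (hasGradientAt_comp_const_smul (c ^ t) (theta_eq ▸ (hL t).hasGradientAt)).gradient
  rw [gradient_Lw, hw, hw, htheta, Nat.cast_succ, zpow_smul_smul_sub_smul hc0, zpow_natCast]

/-- **A dynamical perspective on weight decay** (Equation 3 of the paper). If
`θ_t = (1 - η·λ)·θ_{t-1} - η·∇L(θ_{t-1})` with `c := 1 - η·λ ≠ 0` and `L` differentiable, then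
in the rescaled coordinates `w_t := c^{-t}·θ_t`, with rescaled losses `L^w_t(w) := L(c^t·w)`,
the dynamics reads `w_t = w_{t-1} - c^{-2t+1}·η·∇L^w_{t-1}(w_{t-1})`: weight decay is equivalent
to flattening the loss landscape by `c` and scaling the learning rate by `c^{-2}` per iteration. -/
theorem weight_decay_rescaled_dynamics
    (n : ℕ) (L : EuclideanSpace ℝ (Fin n) → ℝ) (hL : Differentiable ℝ L)
    (eta lam : ℝ) (c : ℝ) (hc : c = 1 - eta * lam) (hc0 : c ≠ 0)
    (theta : ℕ → EuclideanSpace ℝ (Fin n))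
    (htheta : ∀ t : ℕ, theta (t + 1) = c • theta t - eta • gradient L (theta t))
    (w : ℕ → EuclideanSpace ℝ (Fin n))
    (hw : ∀ t : ℕ, w t = (c ^ (-(t : ℤ))) • theta t)
    (Lw : ℕ → EuclideanSpace ℝ (Fin n) → ℝ)
    (hLw : ∀ (t : ℕ) (x : EuclideanSpace ℝ (Fin n)), Lw t x = L ((c ^ t) • x)) :
    ∀ t : ℕ, w (t + 1) =
      w t - (c ^ (-2 * ((t : ℤ) + 1) + 1) * eta) • gradient (Lw t) (w t) :=
  weight_decay_rescaled_dynamics_general hc0 (fun t => hL (theta t)) htheta hw hLw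
end
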